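/- arXiv:0710.5779 — 2 statements merged into one kernel-verified Lean document; each statement's English description precedes it below -/
import Mathlib

section
/- Let W be the set of orthogonal 4×4 real matrices A that map the set {±e₁, ±e₂, ±e₃, ±e₄} of signed standard basis vectors onto itself and map the unordered pair of coordinate planes {span(e₁,e₂), span(e₃,e₄)} onto itself. Then W is a subgroup of O(4,ℝ) of order 128, it contains the group H generated by R₁ = [[0,−1,0,0],[1,0,0,0],[0,0,1,0],[0,0,0,1]], R₂ = [[1,0,0,0],[0,1,0,0],[0,0,0,−1],[0,0,1,0]] and T = [[0,0,1,0],[0,0,0,1],[1,0,0,0],[0,1,0,0]], and H has index 4 in W. -/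
/-- Rotation by `π/2` in the `(e₁,e₂)`-plane, identity on the `(e₃,e₄)`-plane. -/
def R₁ : Matrix (Fin 4) (Fin 4) ℝ :=
  !![0, -1, 0, 0; 1, 0, 0, 0; 0, 0, 1, 0; 0, 0, 0, 1]

/-- Identity on the `(e₁,e₂)`-plane, rotation by `π/2` in the `(e₃,e₄)`-plane. -/
def R₂ : Matrix (Fin 4) (Fin 4) ℝ :=
  !![1, 0, 0, 0; 0, 1, 0, 0; 0, 0, 0, -1; 0, 0, 1, 0]

/-- The permutation matrix simultaneously interchanging `e₁ ↔ e₃` and `e₂ ↔ e₄`. -/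
def Tm : Matrix (Fin 4) (Fin 4) ℝ :=
  !![0, 0, 1, 0; 0, 0, 0, 1; 1, 0, 0, 0; 0, 1, 0, 0]

/-- The set of signed standard basis vectors `{±e₁, ±e₂, ±e₃, ±e₄}` of `ℝ⁴`. -/
def signedBasis : Set (Fin 4 → ℝ) :=
  {v | ∃ i : Fin 4, v = Pi.single i 1 ∨ v = -Pi.single i 1}

/-- The coordinate plane `span(e₁,e₂)` of `ℝ⁴`. -/
def plane₁₂ : Submodule ℝ (Fin 4 → ℝ) :=
  Submodule.span ℝ {(Pi.single 0 1 : Fin 4 → ℝ), (Pi.single 1 1 : Fin 4 → ℝ)}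

/-- The coordinate plane `span(e₃,e₄)` of `ℝ⁴`. -/
def plane₃₄ : Submodule ℝ (Fin 4 → ℝ) :=
  Submodule.span ℝ {(Pi.single 2 1 : Fin 4 → ℝ), (Pi.single 3 1 : Fin 4 → ℝ)}

/-- The condition defining the paper's group `ℤ/2^[3] ⊂ O(4)`: an orthogonal matrix maps
the set of signed standard basis vectors onto itself and the unordered pair of coordinate
planes `{span(e₁,e₂), span(e₃,e₄)}` onto itself. -/
def wCond (A : Matrix.orthogonalGroup (Fin 4) ℝ) : Prop :=
  (fun v => Matrix.mulVec (A : Matrix (Fin 4) (Fin 4) ℝ) v) '' signedBasis = signedBasis ∧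
  ({plane₁₂.map (Matrix.toLin' (A : Matrix (Fin 4) (Fin 4) ℝ)),
    plane₃₄.map (Matrix.toLin' (A : Matrix (Fin 4) (Fin 4) ℝ))} :
      Set (Submodule ℝ (Fin 4 → ℝ))) = {plane₁₂, plane₃₄}

/-!
An orthogonal matrix preserving `{±e₁, …, ±eₙ}` sends each `eⱼ` to `εⱼ • e_{σ j}` for a permutation
`σ` and signs `ε`. It permutes the coordinate subspaces as `σ` permutes the index sets, so the
stabilizer of a family of coordinate subspaces has `2 ^ n` elements for each `σ` preserving the
family of index sets. For `{{1, 2}, {3, 4}}` there are `8` such `σ`, whence `|W| = 8 * 2 ^ 4`.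

The rotations `R₁` and `R₂` commute, have order `4` and generate cyclic groups meeting trivially.
The involution `T` conjugates one into the other, and lies outside `⟨R₁, R₂⟩` because it moves the
plane `span(e₁, e₂)`. Hence `|H| = 2 * 4 ^ 2`, and Lagrange's theorem gives the index.
-/

section Group

variable {G : Type*} [Group G]

theorem card_mul_relIndex {H K : Subgroup G} (hle : H ≤ K) :
    Nat.card H * H.relIndex K = Nat.card K := by
  simpa only [Subgroup.relIndex_bot_left] using Subgroup.relIndex_mul_relIndex ⊥ H K bot_le hle

theorem card_sup_of_commute_of_disjoint {H K : Subgroup G}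
    (hcomm : ∀ h ∈ H, ∀ k ∈ K, Commute h k) (hdisj : Disjoint H K) :
    Nat.card ↥(H ⊔ K) = Nat.card H * Nat.card K := by
  have hcomm' (h : H) (k : K) : Commute (H.subtype h) (K.subtype k) := hcomm h h.2 k k.2
  have hinj : Function.Injective (H.subtype.noncommCoprod K.subtype hcomm') := by
    rw [MonoidHom.noncommCoprod_injective, H.range_subtype, K.range_subtype]
    exact ⟨H.subtype_injective, K.subtype_injective, hdisj⟩
  rw [← Nat.card_prod, Nat.card_congr (MonoidHom.ofInjective hinj).toEquiv,
    MonoidHom.noncommCoprod_range, H.range_subtype, K.range_subtype]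

theorem relIndex_sup_zpowers_eq_two {N : Subgroup G} {t : G}
    (hnorm : t ∈ Subgroup.normalizer (N : Set G)) (hnotMem : t ∉ N) (hsq : t * t ∈ N) :
    N.relIndex (N ⊔ Subgroup.zpowers t) = 2 := by
  rw [Subgroup.relIndex_eq_two_iff_exists_notMem_and]
  refine ⟨t, Subgroup.mem_sup_right (Subgroup.mem_zpowers t), hnotMem, fun b hb => ?_⟩
  rw [← SetLike.mem_coe, Subgroup.coe_mul_of_right_le_normalizer_left _ _
    (Subgroup.zpowers_le.2 hnorm)] at hb
  obtain ⟨y, hy, _, ⟨k, rfl⟩, rfl⟩ := hb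
  have heven (m : ℤ) : t ^ (2 * m) ∈ N := by
    rw [zpow_mul, zpow_two]
    exact N.zpow_mem hsq m
  obtain ⟨m, rfl | rfl⟩ := k.even_or_odd'
  · exact .inr (N.mul_mem hy (heven m))
  · refine .inl ?_
    simpa only [zpow_add_one, mul_assoc] using N.mul_mem hy (N.mul_mem (heven m) hsq)

theorem card_closure_of_semiconjBy_involution {a b t : G} (hab : Commute a b)
    (hta : SemiconjBy t a b) (ht : t * t = 1)
    (hdisj : Disjoint (Subgroup.zpowers a) (Subgroup.zpowers b))
    (hnotMem : t ∉ Subgroup.zpowers a ⊔ Subgroup.zpowers b) :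
    Nat.card (Subgroup.closure {a, b, t}) = 2 * orderOf a ^ 2 := by
  set N := Subgroup.zpowers a ⊔ Subgroup.zpowers b with hN
  have hclosure : Subgroup.closure {a, b, t} = N ⊔ Subgroup.zpowers t := by
    simp only [Set.insert_eq, Subgroup.closure_union, Subgroup.zpowers_eq_closure, hN, sup_assoc]
  have htb : SemiconjBy t b a := by
    simpa only [inv_eq_of_mul_eq_one_left ht] using hta.inv_symm_left
  have hnorm : t ∈ Subgroup.normalizer (N : Set G) := by
    rw [Subgroup.mem_normalizer_iff_map_conj_eq, Subgroup.map_sup, MonoidHom.map_zpowers,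
      MonoidHom.map_zpowers]
    simp only [MonoidHom.coe_coe, MulAut.conj_apply, hta.eq, htb.eq, mul_inv_cancel_right,
      hN, sup_comm]
  have hcardN : Nat.card N = orderOf a ^ 2 := by
    rw [card_sup_of_commute_of_disjoint _ hdisj, Nat.card_zpowers, Nat.card_zpowers,
      ← hta.orderOf_eq t, sq]
    rintro _ ⟨i, rfl⟩ _ ⟨j, rfl⟩
    exact hab.zpow_zpow i j
  have hindex := relIndex_sup_zpowers_eq_two hnorm hnotMem (ht ▸ N.one_mem)
  rw [hclosure, ← card_mul_relIndex le_sup_left, hindex, hcardN, mul_comm]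

end Group

section CoordSubspaces

variable {n : Type*} [Finite n] {R : Type*} [Semiring R]

theorem single_mem_spanSubset_iff [DecidableEq n] [Nontrivial R] {s : Set n} {i : n} :
    Pi.single i 1 ∈ Pi.spanSubset R s ↔ i ∈ s := by
  rw [Pi.mem_spanSubset_iff]
  refine ⟨fun h => ?_, fun h j hj => Pi.single_eq_of_ne (ne_of_mem_of_not_mem h hj).symm 1⟩
  by_contra hi
  simpa using h i hi

theorem spanSubset_injective [Nontrivial R] :
    Function.Injective (Pi.spanSubset R : Set n → Submodule R (n → R)) := by
  classical
  exact fun s t h => Set.ext fun i => by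
    rw [← single_mem_spanSubset_iff (R := R), h, single_mem_spanSubset_iff]

variable (R) in
/-- The family of coordinate subspaces of `n → R` given by the sets of indices in `P`. -/
def coordSubspaces (P : Finset (Finset n)) : Set (Submodule R (n → R)) :=
  (fun s : Finset n => Pi.spanSubset R (s : Set n)) '' P

theorem coordSubspaces_injective [Nontrivial R] :
    Function.Injective (coordSubspaces R : Finset (Finset n) → _) :=
  (spanSubset_injective.comp Finset.coe_injective).image_injective.comp Finset.coe_injective

end CoordSubspaces

section SignedPermutation

open Equiv Matrix MulAction
open scoped Pointwise

theorem intUnits_cast_injective {R : Type*} [Ring R] [NeZero (2 : R)] :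
    Function.Injective fun u : ℤˣ => ((u : ℤ) : R) := by
  have hne : (1 : R) ≠ -1 := fun h => NeZero.ne (2 : R) <| by
    rw [← one_add_one_eq_two, eq_neg_iff_add_eq_zero.1 h]
  intro u v huv
  rcases Int.units_eq_one_or u with rfl | rfl <;> rcases Int.units_eq_one_or v with rfl | rfl <;>
    simp_all [eq_comm]

theorem index_eq_of_units_smul_single_eq {n R : Type*} [DecidableEq n] [Ring R] [Nontrivial R]
    {i j : n} {u v : ℤˣ} (h : u • (Pi.single i 1 : n → R) = v • Pi.single j 1) : i = j := by
  by_contra hij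
  have hcoord := congrFun h i
  rw [Pi.smul_apply, Pi.smul_apply, Pi.single_eq_same, Pi.single_eq_of_ne hij, smul_zero,
    smul_eq_zero_iff_eq] at hcoord
  exact one_ne_zero hcoord

variable {n : Type*} [Fintype n] [DecidableEq n] {R : Type*} [CommRing R]

theorem orthogonalGroup_smul_eq_map (A : orthogonalGroup n R) (P : Submodule R (n → R)) :
    A • P = P.map (toLin' (A : Matrix n n R)) := rfl

theorem orthogonalGroup_ext_single {A B : orthogonalGroup n R}
    (h : ∀ j, A • (Pi.single j 1 : n → R) = B • Pi.single j 1) : A = B :=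
  Subtype.ext (ext_of_mulVec_single h)

variable (R) in
/-- The signed permutation matrix sending the basis vector `e j` to `ε j • e (σ j)`. -/
def signedPermMatrix (σ : Perm n) (ε : n → ℤˣ) : Matrix n n R :=
  of fun i j => if i = σ j then ((ε j : ℤ) : R) else 0

theorem signedPermMatrix_mulVec_single (σ : Perm n) (ε : n → ℤˣ) (j : n) :
    signedPermMatrix R σ ε *ᵥ Pi.single j 1 = ε j • Pi.single (σ j) 1 := by
  ext i
  simp [signedPermMatrix, Pi.single_apply, Units.smul_def]

theorem signedPermMatrix_mem_orthogonalGroup (σ : Perm n) (ε : n → ℤˣ) :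
    signedPermMatrix R σ ε ∈ orthogonalGroup n R := by
  rw [mem_orthogonalGroup_iff']
  ext j k
  have hsq : ((ε j : ℤ) : R) * ((ε j : ℤ) : R) = 1 := by
    rw [← Int.cast_mul, Int.units_coe_mul_self, Int.cast_one]
  simp only [signedPermMatrix, mul_apply, transpose_apply, of_apply, one_apply, ite_mul, mul_ite,
    zero_mul, mul_zero, Finset.sum_ite_eq', Finset.mem_univ, if_true]
  rcases eq_or_ne j k with rfl | hjk
  · simp only [if_true, hsq]
  · simp only [if_neg hjk, if_neg (σ.injective.ne hjk.symm)]

variable (R) in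
/-- The signed permutation matrices as elements of the orthogonal group. -/
def signedPerm (σ : Perm n) (ε : n → ℤˣ) : orthogonalGroup n R :=
  ⟨signedPermMatrix R σ ε, signedPermMatrix_mem_orthogonalGroup σ ε⟩

theorem signedPerm_smul_single (σ : Perm n) (ε : n → ℤˣ) (j : n) :
    signedPerm R σ ε • (Pi.single j 1 : n → R) = ε j • Pi.single (σ j) 1 :=
  signedPermMatrix_mulVec_single σ ε j

theorem signedPerm_smul_units_smul_single (σ : Perm n) (ε : n → ℤˣ) (u : ℤˣ) (j : n) :
    signedPerm R σ ε • u • (Pi.single j 1 : n → R) = (u * ε j) • Pi.single (σ j) 1 := by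
  rw [mul_smul, ← signedPerm_smul_single, smul_comm]

theorem signedPerm_one : signedPerm R (1 : Perm n) 1 = 1 :=
  orthogonalGroup_ext_single fun j => by
    rw [signedPerm_smul_single, Pi.one_apply, Perm.one_apply, one_smul, one_smul]

theorem signedPerm_mul (σ τ : Perm n) (ε δ : n → ℤˣ) :
    signedPerm R σ ε * signedPerm R τ δ = signedPerm R (σ * τ) fun j => δ j * ε (τ j) :=
  orthogonalGroup_ext_single fun j => by
    rw [mul_smul, signedPerm_smul_single, signedPerm_smul_units_smul_single,
      signedPerm_smul_single, Perm.mul_apply]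

theorem signedPerm_smul_spanSubset (σ : Perm n) (ε : n → ℤˣ) (s : Finset n) :
    signedPerm R σ ε • Pi.spanSubset R (s : Set n) = Pi.spanSubset R (↑(σ • s) : Set n) := by
  have hsingle (j : n) :
      Pi.basisFun R n (σ j) = ε j • toLin' (signedPermMatrix R σ ε) (Pi.basisFun R n j) := by
    rw [Pi.basisFun_apply, Pi.basisFun_apply, toLin'_apply, signedPermMatrix_mulVec_single,
      smul_smul, Int.units_mul_self, one_smul]
  rw [Finset.coe_smul_finset, orthogonalGroup_smul_eq_map]
  refine le_antisymm (Submodule.map_span_le .. |>.2 ?_) (Submodule.span_le.2 ?_)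
  · rintro _ ⟨j, hj, rfl⟩
    have hmem : Pi.basisFun R n (σ j) ∈ Pi.spanSubset R (σ • (s : Set n)) :=
      Submodule.subset_span ⟨_, Set.smul_mem_smul_set hj, rfl⟩
    rwa [hsingle, Submodule.smul_mem_iff'] at hmem
  · rintro _ ⟨_, ⟨j, hj, rfl⟩, rfl⟩
    exact hsingle j ▸ Submodule.smul_of_tower_mem _ _
      (Submodule.mem_map_of_mem (Submodule.subset_span ⟨j, hj, rfl⟩))

theorem signedPerm_mem_stabilizer_spanSubset_iff [Nontrivial R] {σ : Perm n} {ε : n → ℤˣ}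
    {s : Finset n} :
    signedPerm R σ ε ∈ stabilizer (orthogonalGroup n R) (Pi.spanSubset R (s : Set n)) ↔
      σ ∈ stabilizer (Perm n) s := by
  rw [mem_stabilizer_iff, mem_stabilizer_iff, signedPerm_smul_spanSubset,
    spanSubset_injective.eq_iff, Finset.coe_inj]

variable (n R) in
/-- The vectors `± e i`, with signs encoded by the units of `ℤ`. -/
def signedVectors : Set (n → R) :=
  Set.range fun p : n × ℤˣ => p.2 • Pi.single p.1 1

theorem signedPerm_smul_signedVectors (σ : Perm n) (ε : n → ℤˣ) :
    signedPerm R σ ε • signedVectors n R = signedVectors n R := by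
  refine Set.Subset.antisymm ?_ ?_
  · rintro _ ⟨_, ⟨⟨j, u⟩, rfl⟩, rfl⟩
    exact ⟨(σ j, u * ε j), (signedPerm_smul_units_smul_single σ ε u j).symm⟩
  · rintro _ ⟨⟨i, u⟩, rfl⟩
    refine ⟨(u * ε (σ.symm i)) • Pi.single (σ.symm i) 1, ⟨(σ.symm i, _), rfl⟩, ?_⟩
    refine (signedPerm_smul_units_smul_single σ ε _ _).trans ?_
    rw [mul_assoc, Int.units_mul_self, mul_one, apply_symm_apply]

theorem exists_eq_signedPerm [Nontrivial R] {A : orthogonalGroup n R}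
    (hA : A ∈ stabilizer (orthogonalGroup n R) (signedVectors n R)) :
    ∃ σ ε, A = signedPerm R σ ε := by
  have himage (j : n) : A • (Pi.single j 1 : n → R) ∈ signedVectors n R :=
    hA ▸ Set.smul_mem_smul_set ⟨(j, 1), one_smul _ _⟩
  choose p hp using himage
  have hinj : Function.Injective fun j => (p j).1 := fun i j hij => by
    have hij' : (p i).1 = (p j).1 := hij
    have hsmul : (p i).2 • (Pi.single i 1 : n → R) = (p j).2 • Pi.single j 1 := by
      refine smul_left_cancel A ?_
      rw [smul_comm, smul_comm A, ← hp i, ← hp j, smul_smul, smul_smul, Int.units_mul_self,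
        Int.units_mul_self, one_smul, one_smul, hij']
    exact index_eq_of_units_smul_single_eq hsmul
  refine ⟨Equiv.ofBijective _ (Finite.injective_iff_bijective.1 hinj), fun j => (p j).2,
    orthogonalGroup_ext_single fun j => ?_⟩
  rw [signedPerm_smul_single, ← hp j, ofBijective_apply]

theorem signedPerm_smul_coordSubspaces (σ : Perm n) (ε : n → ℤˣ) (P : Finset (Finset n)) :
    signedPerm R σ ε • coordSubspaces R P = coordSubspaces R (σ • P) := by
  rw [coordSubspaces, coordSubspaces, Finset.coe_smul_finset, ← Set.image_smul,
    ← Set.image_smul, Set.image_image, Set.image_image]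
  simp only [signedPerm_smul_spanSubset]

variable (R) in
/-- The group of orthogonal matrices that preserve both the set of signed basis vectors and the
family of coordinate subspaces indexed by `P`. -/
def hyperoctahedralStabilizer (P : Finset (Finset n)) : Subgroup (orthogonalGroup n R) :=
  stabilizer _ (signedVectors n R) ⊓ stabilizer _ (coordSubspaces R P)

theorem signedPerm_mem_hyperoctahedralStabilizer_iff [Nontrivial R] {P : Finset (Finset n)}
    {σ : Perm n} {ε : n → ℤˣ} :
    signedPerm R σ ε ∈ hyperoctahedralStabilizer R P ↔ σ ∈ stabilizer (Perm n) P := by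
  rw [hyperoctahedralStabilizer, Subgroup.mem_inf, mem_stabilizer_iff, mem_stabilizer_iff,
    mem_stabilizer_iff, signedPerm_smul_coordSubspaces, coordSubspaces_injective.eq_iff]
  exact and_iff_right (signedPerm_smul_signedVectors σ ε)

theorem coe_hyperoctahedralStabilizer [Nontrivial R] (P : Finset (Finset n)) :
    (hyperoctahedralStabilizer R P : Set (orthogonalGroup n R)) =
      (fun p : Perm n × (n → ℤˣ) => signedPerm R p.1 p.2) ''
        ((stabilizer (Perm n) P : Set (Perm n)) ×ˢ Set.univ) := by
  ext A
  constructor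
  · intro hA
    obtain ⟨σ, ε, rfl⟩ := exists_eq_signedPerm hA.1
    exact ⟨(σ, ε), ⟨signedPerm_mem_hyperoctahedralStabilizer_iff.1 hA, trivial⟩, rfl⟩
  · rintro ⟨⟨σ, ε⟩, ⟨hσ, -⟩, rfl⟩
    exact signedPerm_mem_hyperoctahedralStabilizer_iff.2 hσ

section NeZeroTwo

variable [NeZero (2 : R)]

theorem signedPerm_injective :
    Function.Injective fun p : Perm n × (n → ℤˣ) => signedPerm R p.1 p.2 := by
  have : Nontrivial R := NeZero.nontrivial (2 : R)
  rintro ⟨σ, ε⟩ ⟨τ, δ⟩ h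
  have hsingle (j : n) : ε j • (Pi.single (σ j) 1 : n → R) = δ j • Pi.single (τ j) 1 := by
    rw [← signedPerm_smul_single, ← signedPerm_smul_single]
    exact congrArg (· • (Pi.single j 1 : n → R)) h
  obtain rfl : σ = τ := Equiv.ext fun j => index_eq_of_units_smul_single_eq (hsingle j)
  refine congrArg _ (funext fun j => intUnits_cast_injective (R := R) ?_)
  simpa [Units.smul_def] using congrFun (hsingle j) (σ j)

theorem signedPerm_inj {σ τ : Perm n} {ε δ : n → ℤˣ} :
    signedPerm R σ ε = signedPerm R τ δ ↔ σ = τ ∧ ε = δ :=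
  (signedPerm_injective.eq_iff (a := (σ, ε)) (b := (τ, δ))).trans Prod.mk_inj

theorem card_hyperoctahedralStabilizer (P : Finset (Finset n)) :
    Nat.card (hyperoctahedralStabilizer R P) =
      Nat.card (stabilizer (Perm n) P) * 2 ^ Fintype.card n := by
  have : Nontrivial R := NeZero.nontrivial (2 : R)
  rw [← SetLike.coe_sort_coe, Nat.card_coe_set_eq, coe_hyperoctahedralStabilizer,
    Set.ncard_image_of_injective _ signedPerm_injective, Set.ncard_prod, Set.ncard_univ,
    Nat.card_fun, Nat.card_eq_fintype_card (α := ℤˣ), Fintype.card_units_int,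
    Nat.card_eq_fintype_card (α := n), ← Nat.card_coe_set_eq]
  rfl

end NeZeroTwo

theorem disjoint_zpowers_of_smul_single {A B : orthogonalGroup n R}
    (h : ∀ j, A • (Pi.single j 1 : n → R) = Pi.single j 1 ∨
      B • (Pi.single j 1 : n → R) = Pi.single j 1) :
    Disjoint (Subgroup.zpowers A) (Subgroup.zpowers B) := by
  rw [Subgroup.disjoint_def]
  intro C hCA hCB
  refine orthogonalGroup_ext_single fun j => ?_
  rw [one_smul, ← mem_stabilizer_iff]
  rcases h j with hj | hj
  · exact Subgroup.zpowers_le.2 (mem_stabilizer_iff.2 hj) hCA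
  · exact Subgroup.zpowers_le.2 (mem_stabilizer_iff.2 hj) hCB

end SignedPermutation

section CoordinatePlanes

open Equiv Matrix MulAction
open scoped Pointwise

/-- The partition of the indices into `{0, 1}` and `{2, 3}`, the index sets of the two planes. -/
def planeIndices : Finset (Finset (Fin 4)) :=
  {{0, 1}, {2, 3}}

theorem card_stabilizer_planeIndices : Nat.card (stabilizer (Perm (Fin 4)) planeIndices) = 8 := by
  simp only [Nat.card_eq_fintype_card]
  decide +kernel

theorem plane₁₂_eq_spanSubset : plane₁₂ = Pi.spanSubset ℝ (({0, 1} : Finset (Fin 4)) : Set _) := by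
  simp [plane₁₂, Pi.spanSubset, Set.image_insert_eq]

theorem plane₃₄_eq_spanSubset : plane₃₄ = Pi.spanSubset ℝ (({2, 3} : Finset (Fin 4)) : Set _) := by
  simp [plane₃₄, Pi.spanSubset, Set.image_insert_eq]

theorem coordSubspaces_planeIndices : coordSubspaces ℝ planeIndices = {plane₁₂, plane₃₄} := by
  rw [plane₁₂_eq_spanSubset, plane₃₄_eq_spanSubset, coordSubspaces, planeIndices,
    Finset.coe_insert, Finset.coe_singleton, Set.image_pair]

theorem signedBasis_eq_signedVectors : signedBasis = signedVectors (Fin 4) ℝ := by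
  ext v
  constructor
  · rintro ⟨i, rfl | rfl⟩
    · exact ⟨(i, 1), one_smul _ _⟩
    · exact ⟨(i, -1), by simp [Units.smul_def]⟩
  · rintro ⟨⟨i, u⟩, rfl⟩
    rcases Int.units_eq_one_or u with rfl | rfl
    · exact ⟨i, .inl (one_smul _ _)⟩
    · exact ⟨i, .inr (by simp [Units.smul_def])⟩

theorem mem_hyperoctahedralStabilizer_planeIndices_iff {A : orthogonalGroup (Fin 4) ℝ} :
    A ∈ hyperoctahedralStabilizer ℝ planeIndices ↔ wCond A := by
  rw [hyperoctahedralStabilizer, Subgroup.mem_inf, mem_stabilizer_iff, mem_stabilizer_iff,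
    coordSubspaces_planeIndices, ← signedBasis_eq_signedVectors, ← Set.image_smul,
    ← Set.image_smul, Set.image_pair]
  rfl

theorem R₁_eq_signedPermMatrix : R₁ = signedPermMatrix ℝ (swap 0 1) ![1, -1, 1, 1] := by
  ext i j
  fin_cases i <;> fin_cases j <;> simp [R₁, signedPermMatrix, swap_apply_def]

theorem R₂_eq_signedPermMatrix : R₂ = signedPermMatrix ℝ (swap 2 3) ![1, 1, 1, -1] := by
  ext i j
  fin_cases i <;> fin_cases j <;> simp [R₂, signedPermMatrix, swap_apply_def]

theorem Tm_eq_signedPermMatrix : Tm = signedPermMatrix ℝ (swap 0 2 * swap 1 3) 1 := by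
  ext i j
  fin_cases i <;> fin_cases j <;> simp [Tm, signedPermMatrix, swap_apply_def]

/-- The orthogonal transformation with matrix `R₁`, as a signed permutation. -/
def rotation₁₂ : orthogonalGroup (Fin 4) ℝ :=
  signedPerm ℝ (swap 0 1) ![1, -1, 1, 1]

/-- The orthogonal transformation with matrix `R₂`, as a signed permutation. -/
def rotation₃₄ : orthogonalGroup (Fin 4) ℝ :=
  signedPerm ℝ (swap 2 3) ![1, 1, 1, -1]

/-- The orthogonal transformation with matrix `Tm`, as a signed permutation. -/
def planeSwap : orthogonalGroup (Fin 4) ℝ :=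
  signedPerm ℝ (swap 0 2 * swap 1 3) 1

theorem commute_rotation₁₂_rotation₃₄ : Commute rotation₁₂ rotation₃₄ := by
  rw [commute_iff_eq, rotation₁₂, rotation₃₄, signedPerm_mul, signedPerm_mul]
  exact signedPerm_inj.2 (by decide)

theorem semiconjBy_planeSwap_rotations : SemiconjBy planeSwap rotation₁₂ rotation₃₄ := by
  rw [SemiconjBy, planeSwap, rotation₁₂, rotation₃₄, signedPerm_mul, signedPerm_mul]
  exact signedPerm_inj.2 (by decide)

theorem planeSwap_mul_self : planeSwap * planeSwap = 1 := by
  rw [planeSwap, signedPerm_mul, ← signedPerm_one]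
  exact signedPerm_inj.2 (by decide)

theorem orderOf_rotation₁₂ : orderOf rotation₁₂ = 4 := by
  have hsq : rotation₁₂ ^ 2 = signedPerm ℝ 1 ![-1, -1, 1, 1] := by
    rw [sq, rotation₁₂, signedPerm_mul]
    exact signedPerm_inj.2 (by decide)
  refine orderOf_eq_prime_pow (p := 2) (n := 1) ?_ ?_
  · rw [pow_one, hsq, ← signedPerm_one, signedPerm_inj]
    decide
  · rw [pow_two, pow_mul, hsq, sq, signedPerm_mul, ← signedPerm_one]
    exact signedPerm_inj.2 (by decide)

theorem disjoint_zpowers_rotations :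
    Disjoint (Subgroup.zpowers rotation₁₂) (Subgroup.zpowers rotation₃₄) := by
  refine disjoint_zpowers_of_smul_single fun j => ?_
  rw [rotation₁₂, rotation₃₄, signedPerm_smul_single, signedPerm_smul_single]
  fin_cases j
  · exact .inr (one_smul _ _)
  · exact .inr (one_smul _ _)
  · exact .inl (one_smul _ _)
  · exact .inl (one_smul _ _)

theorem planeSwap_notMem_rotations :
    planeSwap ∉ Subgroup.zpowers rotation₁₂ ⊔ Subgroup.zpowers rotation₃₄ := fun hmem => by
  let s : Finset (Fin 4) := {0, 1}
  have hle : Subgroup.zpowers rotation₁₂ ⊔ Subgroup.zpowers rotation₃₄ ≤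
      stabilizer (orthogonalGroup (Fin 4) ℝ) (Pi.spanSubset ℝ (s : Set (Fin 4))) :=
    sup_le (Subgroup.zpowers_le.2 (signedPerm_mem_stabilizer_spanSubset_iff.2 (by decide)))
      (Subgroup.zpowers_le.2 (signedPerm_mem_stabilizer_spanSubset_iff.2 (by decide)))
  have hswap : swap 0 2 * swap 1 3 ∉ stabilizer (Perm (Fin 4)) s := by decide
  exact hswap (signedPerm_mem_stabilizer_spanSubset_iff.1 (hle hmem))

theorem card_closure_rotations_planeSwap :
    Nat.card (Subgroup.closure {rotation₁₂, rotation₃₄, planeSwap}) = 32 := by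
  rw [card_closure_of_semiconjBy_involution commute_rotation₁₂_rotation₃₄
    semiconjBy_planeSwap_rotations planeSwap_mul_self disjoint_zpowers_rotations
    planeSwap_notMem_rotations, orderOf_rotation₁₂]
  norm_num

theorem card_hyperoctahedralStabilizer_planeIndices :
    Nat.card (hyperoctahedralStabilizer ℝ planeIndices) = 128 := by
  rw [card_hyperoctahedralStabilizer, card_stabilizer_planeIndices, Fintype.card_fin]
  norm_num

theorem closure_rotations_planeSwap_le :
    Subgroup.closure {rotation₁₂, rotation₃₄, planeSwap} ≤
      hyperoctahedralStabilizer ℝ planeIndices := by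
  rw [Subgroup.closure_le]
  rintro _ (rfl | rfl | rfl) <;>
    exact signedPerm_mem_hyperoctahedralStabilizer_iff.2 (by decide)

end CoordinatePlanes

/-- The set `W` of orthogonal matrices permuting the signed basis vectors and preserving
the unordered pair of coordinate planes is a subgroup of `O(4,ℝ)` of order 128 containing
the group `H` generated by `R₁, R₂, T`, and `H` has index 4 in `W`. -/
theorem stmt_8 :
    ∃ W : Subgroup (Matrix.orthogonalGroup (Fin 4) ℝ),
      (W : Set (Matrix.orthogonalGroup (Fin 4) ℝ)) = {A | wCond A} ∧
      Nat.card W = 128 ∧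
      ∃ (h₁ : R₁ ∈ Matrix.orthogonalGroup (Fin 4) ℝ)
        (h₂ : R₂ ∈ Matrix.orthogonalGroup (Fin 4) ℝ)
        (hT : Tm ∈ Matrix.orthogonalGroup (Fin 4) ℝ),
        Subgroup.closure
          ({⟨R₁, h₁⟩, ⟨R₂, h₂⟩, ⟨Tm, hT⟩} : Set (Matrix.orthogonalGroup (Fin 4) ℝ)) ≤ W ∧
        ((Subgroup.closure
          ({⟨R₁, h₁⟩, ⟨R₂, h₂⟩, ⟨Tm, hT⟩} :
            Set (Matrix.orthogonalGroup (Fin 4) ℝ))).subgroupOf W).index = 4 := by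
  have h₁ : R₁ ∈ Matrix.orthogonalGroup (Fin 4) ℝ := R₁_eq_signedPermMatrix ▸ rotation₁₂.2
  have h₂ : R₂ ∈ Matrix.orthogonalGroup (Fin 4) ℝ := R₂_eq_signedPermMatrix ▸ rotation₃₄.2
  have hT : Tm ∈ Matrix.orthogonalGroup (Fin 4) ℝ := Tm_eq_signedPermMatrix ▸ planeSwap.2
  refine ⟨hyperoctahedralStabilizer ℝ planeIndices,
    Set.ext fun _ => mem_hyperoctahedralStabilizer_planeIndices_iff,
    card_hyperoctahedralStabilizer_planeIndices, h₁, h₂, hT, ?_⟩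
  have hgen : ({⟨R₁, h₁⟩, ⟨R₂, h₂⟩, ⟨Tm, hT⟩} : Set (Matrix.orthogonalGroup (Fin 4) ℝ)) =
      {rotation₁₂, rotation₃₄, planeSwap} := by
    congr
    · exact R₁_eq_signedPermMatrix
    · exact R₂_eq_signedPermMatrix
    · exact Tm_eq_signedPermMatrix
  rw [hgen]
  have hlagrange := card_mul_relIndex closure_rotations_planeSwap_le
  rw [card_closure_rotations_planeSwap, card_hyperoctahedralStabilizer_planeIndices] at hlagrange
  exact ⟨closure_rotations_planeSwap_le, Nat.eq_of_mul_eq_mul_left (by norm_num) hlagrange⟩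
end

section
/- The fourth cohomology group of the quaternion group Q₈ of order 8 with coefficients in ℤ with the trivial action, H⁴(Q₈; ℤ), is a cyclic group of order 8, i.e., it is isomorphic as an abelian group to ℤ/8. -/
/-!
Let `Q` be the generalized quaternion group of order `4n`, with generators `x = a 1` and
`y = xa 1`, and put `z = x * y` and `L = 1 + x + ⋯ + x ^ (n - 1)`. For every coefficient module
`A` the matrices

  `d₀ = (x - 1, 1 - y)`, `d₁ = (L, y + 1; z + 1, 1 - x)`, `d₂ = (x - 1, 1 - z)`

over the group ring turn the left translation action on functions `F = (Q → A)` into an exact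
sequence `0 → A → F → F × F → F × F → F → A → 0`, equivariant for right translations, which
begins with the constants and ends with the sum of values. The representations in the middle are
coinduced, so dimension shifting identifies `H⁴(Q; A)` with `H¹` of the kernel of the sum map,
which is the cokernel of `F^Q → A`, that is `A / 4nA`.

Exactness only uses that `F` is relatively projective. An invariant vector is then a norm, and a
vector of norm zero is a combination of vectors `g m - m`, both for `Q` and for its cyclic
subgroup generated by `x`.
-/

open CategoryTheory Limits QuaternionGroup Representation
open scoped Pointwise

namespace PeriodicResolution

universe u

section RelativelyProjective

variable {k G M : Type*} [CommRing k] [Group G] [Fintype G] [AddCommGroup M] [Module k M]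
  {ρ : Representation k G M}

/-- A representation of a finite group is relatively projective if the identity is the trace
`∑ g * e * g⁻¹` of some linear endomorphism `e` (Higman's criterion). -/
def IsRelativelyProjective (ρ : Representation k G M) : Prop :=
  ∃ e : Module.End k M, ∑ g, ρ g * e * ρ g⁻¹ = 1

lemma IsRelativelyProjective.exists_norm_eq (hρ : IsRelativelyProjective ρ) {m : M}
    (hm : m ∈ ρ.invariants) : ∃ m', ρ.norm m' = m := by
  obtain ⟨e, he⟩ := hρ
  refine ⟨e m, ?_⟩
  calc ρ.norm (e m) = (∑ g, ρ g * e * ρ g⁻¹) m := by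
        simp [Representation.norm, (mem_invariants ρ m).1 hm]
    _ = m := by rw [he, Module.End.one_apply]

lemma IsRelativelyProjective.mem_coinvariantsKer (hρ : IsRelativelyProjective ρ) {m : M}
    (hm : ρ.norm m = 0) : m ∈ Coinvariants.ker ρ := by
  obtain ⟨e, he⟩ := hρ
  have h_norm : ∑ g, e (ρ g⁻¹ m) = 0 := by
    rw [← map_sum, Fintype.sum_equiv (.inv G) (fun g ↦ ρ g⁻¹ m) (fun g ↦ ρ g m) fun _ ↦ rfl,
      ← LinearMap.sum_apply]
    exact (congrArg e hm).trans (map_zero e)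
  have h_trace : m = ∑ g, (ρ g (e (ρ g⁻¹ m)) - e (ρ g⁻¹ m)) := by
    rw [Finset.sum_sub_distrib, h_norm, sub_zero]
    simpa using congr($he.symm m)
  rw [h_trace]
  exact Submodule.sum_mem _ fun g _ ↦ Coinvariants.sub_mem_ker g _

end RelativelyProjective

section Translation

variable (k G A : Type*) [CommRing k] [Group G] [AddCommGroup A] [Module k A]

/-- The action `(g f)(h) = f (h g)` of `G` on functions `G → A`. -/
def rightTranslation : Representation k G (G → A) where
  toFun g := LinearMap.funLeft k A (· * g)
  map_one' := by ext; simp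
  map_mul' _ _ := by ext; simp [mul_assoc]

/-- The action `(g f)(h) = f (g⁻¹ h)` of `G` on functions `G → A`. -/
def leftTranslation : Representation k G (G → A) where
  toFun g := LinearMap.funLeft k A (g⁻¹ * ·)
  map_one' := by ext; simp
  map_mul' _ _ := by ext; simp [mul_assoc]

variable {k G A}

@[simp]
lemma rightTranslation_apply (g h : G) (f : G → A) :
    rightTranslation k G A g f h = f (h * g) := rfl

@[simp]
lemma leftTranslation_apply (g h : G) (f : G → A) :
    leftTranslation k G A g f h = f (g⁻¹ * h) := rfl

variable (k A) in
/-- Right translation by `g`, as an endomorphism of the left translation representation. -/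
def rightTranslationHom (g : G) :
    (leftTranslation k G A).IntertwiningMap (leftTranslation k G A) :=
  ⟨rightTranslation k G A g, fun _ ↦ by ext; simp [mul_assoc]⟩

variable [Fintype G]

lemma norm_leftTranslation_apply (f : G → A) (h : G) :
    (leftTranslation k G A).norm f h = ∑ g, f g := by
  simp only [Representation.norm, LinearMap.sum_apply, Finset.sum_apply, leftTranslation_apply]
  exact Fintype.sum_equiv ((Equiv.inv G).trans (Equiv.mulRight h)) _ _ fun _ ↦ rfl

variable (k G A) in
lemma isRelativelyProjective_leftTranslation :
    IsRelativelyProjective (leftTranslation k G A) := by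
  classical
  refine ⟨LinearMap.single k (fun _ ↦ A) 1 ∘ₗ LinearMap.proj 1, ?_⟩
  ext f h
  simp [Pi.single_apply, inv_mul_eq_one]

end Translation

section DimensionShifting

lemma shortExact_kernelLift {C : Type*} [Category* C] [Abelian C] {K X Y Z : C} {i : K ⟶ X}
    {f : X ⟶ Y} {g : Y ⟶ Z} [Mono i] {w : i ≫ f = 0} {w' : f ≫ g = 0}
    (h : (ShortComplex.mk i f w).Exact) (h' : (ShortComplex.mk f g w').Exact) :
    (ShortComplex.mk i (kernel.lift g f w')
      (by simp [← cancel_mono (kernel.ι g), w])).ShortExact := by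
  let S := ShortComplex.mk i (kernel.lift g f w') (by simp [← cancel_mono (kernel.ι g), w])
  let φ : S ⟶ ShortComplex.mk i f w := { τ₁ := 𝟙 _, τ₂ := 𝟙 _, τ₃ := kernel.ι g }
  have : Epi φ.τ₁ := inferInstanceAs (Epi (𝟙 K))
  have : IsIso φ.τ₂ := inferInstanceAs (IsIso (𝟙 X))
  have : Mono φ.τ₃ := inferInstanceAs (Mono (kernel.ι g))
  exact
    { exact := (ShortComplex.exact_iff_of_epi_of_isIso_of_mono φ).2 h
      mono_f := ‹_›
      epi_g := h'.epi_kernelLift }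

variable {k G : Type u} [CommRing k] [Group G]

lemma comp_eq_zero_of_function_exact {M N P : Rep.{u} k G} {f : M ⟶ N} {g : N ⟶ P}
    (h : Function.Exact f.hom g.hom) : f ≫ g = 0 :=
  Rep.hom_ext (DFunLike.ext _ _ h.apply_apply_eq_zero)

lemma exact_of_function_exact {M N P : Rep.{u} k G} {f : M ⟶ N} {g : N ⟶ P}
    (h : Function.Exact f.hom g.hom) :
    (ShortComplex.mk f g (comp_eq_zero_of_function_exact h)).Exact := by
  apply (forget₂ _ (ModuleCat k)).reflects_exact_of_faithful
  rw [ShortComplex.moduleCat_exact_iff]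
  exact fun m ↦ (h m).1

/-- A representation is acyclic if its cohomology vanishes in every positive degree. -/
def IsAcyclic (M : Rep.{u} k G) : Prop := ∀ m : ℕ, IsZero (groupCohomology M (m + 1))

lemma IsAcyclic.of_iso {M N : Rep.{u} k G} (hN : IsAcyclic N) (e : M ≅ N) : IsAcyclic M :=
  fun m ↦ (hN m).of_iso ((groupCohomology.functor k G (m + 1)).mapIso e)

/-- The connecting isomorphism of a short exact sequence whose middle term is acyclic. -/
noncomputable def dimensionShift {S : ShortComplex (Rep.{u} k G)} (hS : S.ShortExact)
    (hM : IsAcyclic S.X₂) (m : ℕ) :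
    groupCohomology S.X₃ (m + 1) ≅ groupCohomology S.X₁ (m + 2) :=
  haveI := groupCohomology.isIso_δ_of_isZero hS (m + 1) (hM m) (hM (m + 1))
  asIso (groupCohomology.δ hS (m + 1) (m + 2) rfl)

variable (k G) in
lemma isAcyclic_rightTranslation (A : Type u) [AddCommGroup A] [Module k A] :
    IsAcyclic (Rep.of (rightTranslation k G A)) := by
  let e : Rep.of (rightTranslation k G A) ≅
      Rep.coind (⊥ : Subgroup G).subtype (Rep.trivial k (⊥ : Subgroup G) A) :=
    Rep.mkIso <| .mk
      { toFun f := ⟨f, fun ⟨g, hg⟩ h ↦ by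
          obtain rfl := Subgroup.mem_bot.1 hg
          simp⟩
        map_add' _ _ := rfl
        map_smul' _ _ := rfl
        invFun f := f.1
        left_inv _ := rfl
        right_inv _ := rfl } fun g ↦ by ext; rfl
  exact .of_iso (fun m ↦ (isZero_groupCohomology_succ_of_subsingleton
    (Rep.trivial k (⊥ : Subgroup G) A) m).of_iso (groupCohomology.coindIso _ _)) e

variable (k G) in
lemma isAcyclic_rightTranslation_prod (A : Type u) [AddCommGroup A] [Module k A] :
    IsAcyclic (Rep.of ((rightTranslation k G A).prod (rightTranslation k G A))) :=
  (isAcyclic_rightTranslation k G (A × A)).of_iso <| Rep.mkIso <| .mk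
    { Equiv.arrowProdEquivProdArrow G (fun _ ↦ A) (fun _ ↦ A) |>.symm with
      map_add' _ _ := rfl
      map_smul' _ _ := rfl } fun _ ↦ by ext <;> rfl

end DimensionShifting

section ConnectingHom

open groupCohomology

variable {k G : Type u} [CommRing k] [Group G]

lemma H0IsoOfIsTrivial_hom_map_H0Iso_inv {M N : Rep.{u} k G} [N.ρ.IsTrivial] (f : M ⟶ N)
    (m : M.ρ.invariants) :
    (H0IsoOfIsTrivial N).hom (map (MonoidHom.id G) f 0 ((H0Iso M).inv m)) = f.hom m.1 := by
  refine congr($(map_H0Iso_hom_f (MonoidHom.id G) f) ((H0Iso M).inv m)).trans ?_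
  change f.hom ((shortComplexH0 M).f ((H0Iso M).hom ((H0Iso M).inv m))) = _
  rw [Iso.inv_hom_id_apply]
  rfl

variable {S : ShortComplex (Rep.{u} k G)} [S.X₃.ρ.IsTrivial]

/-- The connecting homomorphism from degree 0 to degree 1, with `H⁰(G; S.X₃)` identified with
`S.X₃`. -/
noncomputable def connectingHom (hS : S.ShortExact) : S.X₃ →ₗ[k] groupCohomology S.X₁ 1 :=
  ((H0IsoOfIsTrivial S.X₃).inv ≫ δ hS 0 1 rfl).hom

lemma connectingHom_surjective (hS : S.ShortExact) (hM : IsZero (groupCohomology S.X₂ 1)) :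
    Function.Surjective (connectingHom hS) := by
  have := epi_δ_of_isZero hS 0 hM
  exact (ModuleCat.epi_iff_surjective ((H0IsoOfIsTrivial S.X₃).inv ≫ δ hS 0 1 rfl)).1 inferInstance

lemma ker_connectingHom (hS : S.ShortExact) :
    LinearMap.ker (connectingHom hS) = S.X₂.ρ.invariants.map S.g.hom.toLinearMap := by
  have h_exact : Function.Exact (map (MonoidHom.id G) S.g 0) (δ hS 0 1 rfl) :=
    (ShortComplex.ShortExact.moduleCat_exact_iff_function_exact _).1
      (mapShortComplex₃_exact hS (i := 0) (j := 1) rfl)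
  ext n
  refine (h_exact _).trans ⟨?_, ?_⟩
  · rintro ⟨x, hx⟩
    induction x using H0_induction_on with | h m =>
    refine ⟨m.1, m.2, (H0IsoOfIsTrivial_hom_map_H0Iso_inv S.g m).symm.trans ?_⟩
    rw [hx]
    exact Iso.inv_hom_id_apply _ _
  · rintro ⟨m, hm, rfl⟩
    refine ⟨(H0Iso S.X₂).inv ⟨m, hm⟩,
      (Iso.hom_inv_id_apply (H0IsoOfIsTrivial S.X₃) _).symm.trans ?_⟩
    rw [H0IsoOfIsTrivial_hom_map_H0Iso_inv S.g ⟨m, hm⟩]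
    rfl

end ConnectingHom

section Augmentation

variable (k G A : Type u) [CommRing k] [Group G] [AddCommGroup A] [Module k A]

/-- The inclusion of `A` into the functions `G → A` as the constants. -/
def constHom : Rep.trivial k G A ⟶ Rep.of (rightTranslation k G A) :=
  Rep.ofHom ⟨LinearMap.pi fun _ ↦ LinearMap.id, fun _ ↦ rfl⟩

instance : Mono (constHom k G A) :=
  (Rep.mono_iff_injective _).2 fun _ _ h ↦ congrFun h 1

variable [Fintype G]

/-- The sum of the values of a function `G → A`. -/
def augmentation : Rep.of (rightTranslation k G A) ⟶ Rep.trivial k G A :=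
  Rep.ofHom ⟨∑ g, LinearMap.proj g, fun g ↦ by
    ext f
    simpa using Equiv.sum_comp (Equiv.mulRight g) f⟩

variable {k G A} in
lemma augmentation_apply (f : G → A) : (augmentation k G A).hom f = ∑ g, f g := by
  simp [augmentation]

instance : Epi (augmentation k G A) := by
  classical
  exact (Rep.epi_iff_surjective _).2 fun c ↦ ⟨Pi.single 1 c, by
    exact (augmentation_apply _).trans ((Finset.sum_pi_single' 1 c .univ).trans (by simp))⟩

lemma shortExact_augmentation :
    (ShortComplex.mk (kernel.ι (augmentation k G A)) (augmentation k G A)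
      (kernel.condition _)).ShortExact where
  exact := ShortComplex.exact_kernel _
  mono_f := inferInstanceAs (Mono (kernel.ι _))
  epi_g := inferInstanceAs (Epi (augmentation k G A))

lemma map_augmentation_invariants :
    (rightTranslation k G A).invariants.map (augmentation k G A).hom.toLinearMap =
      (Fintype.card G : k) • (⊤ : Submodule k A) := by
  have h_const (c : A) :
      (augmentation k G A).hom (fun _ : G ↦ c) = (Fintype.card G : k) • c := by
    rw [augmentation_apply, Finset.sum_const, Finset.card_univ, Nat.cast_smul_eq_nsmul]
  ext c
  rw [Submodule.mem_smul_pointwise_iff_exists]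
  constructor
  · rintro ⟨f, hf, rfl⟩
    obtain ⟨b, rfl⟩ : ∃ b, f = fun _ ↦ b :=
      ⟨f 1, funext fun g ↦ by simpa using congrFun (hf g) 1⟩
    exact ⟨b, trivial, (h_const b).symm⟩
  · rintro ⟨b, -, rfl⟩
    exact ⟨fun _ ↦ b, fun _ ↦ rfl, h_const b⟩

/-- The first cohomology of the augmentation kernel is `A / |G| A`. -/
noncomputable def H1KernelAugmentationEquiv :
    groupCohomology (kernel (augmentation k G A)) 1 ≃ₗ[k]
      QuotSMulTop (Fintype.card G : k) A :=
  have hS := shortExact_augmentation k G A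
  ((Submodule.quotEquivOfEq _ _
      ((ker_connectingHom hS).trans (map_augmentation_invariants k G A))).symm.trans
    ((connectingHom hS).quotKerEquivOfSurjective
      (connectingHom_surjective hS (isAcyclic_rightTranslation k G A 0)))).symm

end Augmentation

section Quaternion

variable {n : ℕ}

/-- The inclusion of the cyclic subgroup of order `2n` generated by `a 1`. -/
def rotation (n : ℕ) : Multiplicative (ZMod (2 * n)) →* QuaternionGroup n where
  toFun i := a i.toAdd
  map_one' := rfl
  map_mul' _ _ := rfl

lemma mem_zpowers_ofAdd_one {m : ℕ} (i : Multiplicative (ZMod m)) :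
    i ∈ Subgroup.zpowers (Multiplicative.ofAdd (1 : ZMod m)) :=
  ⟨i.toAdd.cast, Multiplicative.toAdd.injective (by simp)⟩

lemma sum_quaternionGroup [NeZero n] {B : Type*} [AddCommMonoid B] (F : QuaternionGroup n → B) :
    ∑ g, F g = ∑ i, F (a i) + ∑ i, F (xa i) := by
  refine (Fintype.sum_bijective (Sum.elim a xa) ⟨?_, ?_⟩ _ F fun _ ↦ rfl).symm.trans
    (Fintype.sum_sum_type _)
  · rintro (i | i) (j | j) h <;> simp_all
  · rintro (i | i)
    exacts [⟨.inl i, rfl⟩, ⟨.inr i, rfl⟩]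

lemma sum_zmod_two_mul [NeZero n] {B : Type*} [AddCommMonoid B] (F : ZMod (2 * n) → B) :
    ∑ i, F i = ∑ i ∈ Finset.range n, F i + ∑ i ∈ Finset.range n, F (n + i) := by
  calc ∑ i, F i = ∑ i ∈ Finset.range (2 * n), F i :=
        Finset.sum_nbij' ZMod.val Nat.cast (by simp [ZMod.val_lt]) (by simp) (by simp)
          (fun j hj ↦ ZMod.val_cast_of_lt (Finset.mem_range.1 hj)) (by simp)
    _ = ∑ i ∈ Finset.range n, F i + ∑ i ∈ Finset.range n, F (n + i) := by
        simp [two_mul, Finset.sum_range_add]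

variable {k M M' : Type*} [CommRing k] [AddCommGroup M] [Module k M] [AddCommGroup M'] [Module k M']
  (ρ : Representation k (QuaternionGroup n) M) {σ : Representation k (QuaternionGroup n) M'}

/-- The operator `L = 1 + x + ⋯ + x ^ (n - 1)`, where `x = a 1`. -/
def halfNorm : Module.End k M := ∑ i ∈ Finset.range n, ρ (a i)

/-- The operator `(x - 1, 1 - y)`, where `x = a 1` and `y = xa 1`. -/
def d₀ : M →ₗ[k] M × M := (ρ (a 1) - 1).prod (1 - ρ (xa 1))

/-- The operator `(u, v) ↦ (L u + (y + 1) v, (z + 1) u + (1 - x) v)`, where `x = a 1`, `y = xa 1`,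
`z = x * y = xa 0` and `L` is `halfNorm`. -/
def d₁ : M × M →ₗ[k] M × M :=
  ((halfNorm ρ).coprod (ρ (xa 1) + 1)).prod ((ρ (xa 0) + 1).coprod (1 - ρ (a 1)))

/-- The operator `(u, v) ↦ (x - 1) u + (1 - z) v`, where `x = a 1` and `z = xa 0`. -/
def d₂ : M × M →ₗ[k] M := (ρ (a 1) - 1).coprod (1 - ρ (xa 0))

lemma d₀_apply (m : M) : d₀ ρ m = (ρ (a 1) m - m, m - ρ (xa 1) m) := rfl

lemma d₁_apply (u v : M) :
    d₁ ρ (u, v) = (halfNorm ρ u + (ρ (xa 1) v + v), ρ (xa 0) u + u + (v - ρ (a 1) v)) := rfl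

lemma d₂_apply (u v : M) : d₂ ρ (u, v) = ρ (a 1) u - u + (v - ρ (xa 0) v) := rfl

lemma apply_apply (g h : QuaternionGroup n) (m : M) : ρ g (ρ h m) = ρ (g * h) m := by simp

lemma halfNorm_apply_a_one (m : M) :
    halfNorm ρ (ρ (a 1) m) = halfNorm ρ m + ρ (a n) m - m := by
  have h := congr($(geom_sum_mul (ρ (a 1)) n) m)
  simp only [← map_pow, a_one_pow] at h
  change halfNorm ρ (ρ (a 1) m - m) = ρ (a n) m - m at h
  rw [add_sub_assoc, ← h, map_sub, add_sub_cancel]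

lemma a_one_apply_halfNorm (m : M) :
    ρ (a 1) (halfNorm ρ m) = halfNorm ρ m + ρ (a n) m - m := by
  have h := congr($(mul_geom_sum (ρ (a 1)) n) m)
  simp only [← map_pow, a_one_pow] at h
  change ρ (a 1) (halfNorm ρ m) - halfNorm ρ m = ρ (a n) m - m at h
  rw [add_sub_assoc, ← h, add_sub_cancel]

variable {ρ} in
lemma d₀_naturality (T : ρ.IntertwiningMap σ) :
    d₀ σ ∘ₗ T.toLinearMap = T.toLinearMap.prodMap T.toLinearMap ∘ₗ d₀ ρ := by
  ext m <;> simp [d₀, T.isIntertwining]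

variable {ρ} in
lemma halfNorm_naturality (T : ρ.IntertwiningMap σ) (m : M) :
    halfNorm σ (T m) = T (halfNorm ρ m) := by
  simp [halfNorm, T.isIntertwining]

variable {ρ} in
lemma d₁_naturality (T : ρ.IntertwiningMap σ) :
    d₁ σ ∘ₗ T.toLinearMap.prodMap T.toLinearMap =
      T.toLinearMap.prodMap T.toLinearMap ∘ₗ d₁ ρ := by
  ext m <;> simp [d₁, halfNorm_naturality, T.isIntertwining]

variable {ρ} in
lemma d₂_naturality (T : ρ.IntertwiningMap σ) :
    d₂ σ ∘ₗ T.toLinearMap.prodMap T.toLinearMap = T.toLinearMap ∘ₗ d₂ ρ := by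
  ext m <;> simp [d₂, T.isIntertwining]

lemma d₁_d₀_apply (m : M) : d₁ ρ (d₀ ρ m) = 0 := by
  rw [d₀_apply, d₁_apply]
  ext
  · simp only [map_sub, halfNorm_apply_a_one, apply_apply, xa_mul_xa, add_sub_cancel_right,
      Prod.fst_zero]
    abel
  · simp only [map_sub, apply_apply, xa_mul_a, zero_add, a_mul_xa, sub_self, Prod.snd_zero]
    abel

lemma d₂_d₁_apply (w : M × M) : d₂ ρ (d₁ ρ w) = 0 := by
  obtain ⟨u, v⟩ := w
  rw [d₁_apply, d₂_apply]
  simp only [map_add, map_sub, a_one_apply_halfNorm, apply_apply, a_mul_xa, xa_mul_xa, xa_mul_a,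
    sub_self, add_zero, sub_zero, zero_add]
  abel

variable {ρ} in
lemma mem_invariants_iff_a_one_xa_one {m : M} :
    m ∈ ρ.invariants ↔ ρ (a 1) m = m ∧ ρ (xa 1) m = m := by
  refine ⟨fun h ↦ ⟨h _, h _⟩, fun ⟨h_a, h_xa⟩ ↦ ?_⟩
  have h_rotation (i : ZMod (2 * n)) : ρ (a i) m = m :=
    (mem_invariants_iff_of_forall_mem_zpowers (ρ.comp (rotation n)) _
      mem_zpowers_ofAdd_one m).2 h_a (.ofAdd i)
  rintro (i | i)
  · exact h_rotation i
  · calc ρ (xa i) m = ρ (xa 1) (ρ (a (i - 1)) m) := by simp [apply_apply, -map_mul]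
      _ = m := by rw [h_rotation, h_xa]

lemma exact_subtype_d₀ : Function.Exact ρ.invariants.subtype (d₀ ρ) := by
  intro m
  simp [d₀, mem_invariants_iff_a_one_xa_one, sub_eq_zero, eq_comm (a := m), -mem_invariants]

variable [NeZero n]

/-- The sum of `ρ` over the cyclic subgroup of rotations. -/
def cyclicNorm : Module.End k M := Representation.norm (ρ.comp (rotation n))

@[simp]
lemma cyclicNorm_apply_a_one (m : M) : cyclicNorm ρ (ρ (a 1) m) = cyclicNorm ρ m :=
  norm_self_apply (ρ.comp (rotation n)) (.ofAdd 1) m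

@[simp]
lemma a_one_apply_cyclicNorm (m : M) : ρ (a 1) (cyclicNorm ρ m) = cyclicNorm ρ m :=
  self_norm_apply (ρ.comp (rotation n)) (.ofAdd 1) m

lemma cyclicNorm_apply (m : M) : cyclicNorm ρ m = ∑ i, ρ (a i) m := by
  rw [cyclicNorm, Representation.norm, LinearMap.sum_apply]
  exact Fintype.sum_equiv Multiplicative.toAdd _ _ fun _ ↦ rfl

lemma cyclicNorm_apply_xa (j : ZMod (2 * n)) (m : M) :
    cyclicNorm ρ (ρ (xa j) m) = ∑ i, ρ (xa i) m := by
  simp only [cyclicNorm_apply, apply_apply, a_mul_xa]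
  exact Fintype.sum_equiv (.subLeft j) _ _ fun _ ↦ rfl

lemma xa_apply_cyclicNorm (j : ZMod (2 * n)) (m : M) :
    ρ (xa j) (cyclicNorm ρ m) = ∑ i, ρ (xa i) m := by
  simp only [cyclicNorm_apply, map_sum, apply_apply, xa_mul_a]
  exact Fintype.sum_equiv (.addLeft j) _ _ fun _ ↦ rfl

lemma cyclicNorm_apply_xa_zero (m : M) :
    cyclicNorm ρ (ρ (xa 0) m) = ρ (xa 1) (cyclicNorm ρ m) := by
  rw [cyclicNorm_apply_xa, xa_apply_cyclicNorm]

lemma norm_eq_cyclicNorm_add (m : M) :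
    ρ.norm m = cyclicNorm ρ m + ρ (xa 1) (cyclicNorm ρ m) := by
  rw [xa_apply_cyclicNorm, cyclicNorm_apply]
  simp only [Representation.norm, sum_quaternionGroup, LinearMap.add_apply, LinearMap.sum_apply]

lemma xa_one_apply_cyclicNorm_eq_halfNorm (m : M) :
    ρ (xa 1) (cyclicNorm ρ m) =
      halfNorm ρ (ρ (xa 0) m) + ρ (xa 1) (halfNorm ρ m) := by
  have h_reflect : ∑ i ∈ Finset.range n, ρ (xa (1 + (n + i))) m =
      ∑ i ∈ Finset.range n, ρ (xa (0 - i)) m := by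
    rw [← Finset.sum_range_reflect]
    refine Finset.sum_congr rfl fun i hi ↦ ?_
    have hn : ((2 * n : ℕ) : ZMod (2 * n)) = 0 := ZMod.natCast_self _
    have hi' : ((n - 1 - i : ℕ) : ZMod (2 * n)) = n - 1 - i := by
      have := Finset.mem_range.1 hi
      rw [Nat.cast_sub (by lia), Nat.cast_sub (by lia), Nat.cast_one]
    push_cast at hn
    rw [hi']
    congr 3
    linear_combination hn
  calc ρ (xa 1) (cyclicNorm ρ m) = ∑ i, ρ (xa (1 + i)) m := by
        rw [xa_apply_cyclicNorm, ← Equiv.sum_comp (Equiv.addLeft 1)]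
        rfl
    _ = halfNorm ρ (ρ (xa 0) m) + ρ (xa 1) (halfNorm ρ m) := by
        rw [sum_zmod_two_mul, h_reflect, add_comm]
        simp [halfNorm, apply_apply, -map_mul]

lemma d₀_apply_cyclicNorm (m : M) :
    d₀ ρ (cyclicNorm ρ m) = (0, cyclicNorm ρ m - ρ (xa 1) (cyclicNorm ρ m)) := by
  simp [d₀]

lemma d₁_apply_sub_halfNorm (m : M) :
    d₁ ρ (ρ (xa 0) m - m, halfNorm ρ m) = (ρ (xa 1) (cyclicNorm ρ m), 0) := by
  rw [xa_one_apply_cyclicNorm_eq_halfNorm, d₁_apply]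
  ext
  · simp
  · simp only [map_sub, apply_apply, xa_mul_xa, add_zero, sub_zero, sub_add_sub_cancel,
      a_one_apply_halfNorm]
    abel

lemma cyclicNorm_apply_d₂ (u v : M) :
    cyclicNorm ρ (d₂ ρ (u, v)) = cyclicNorm ρ v - ρ (xa 1) (cyclicNorm ρ v) := by
  simp [d₂, cyclicNorm_apply_xa_zero]

variable {ρ}

lemma cyclicNorm_eq_zero_of_d₁_eq_zero {u v : M} (h : d₁ ρ (u, v) = 0) : cyclicNorm ρ u = 0 := by
  obtain ⟨h_fst, h_snd⟩ :
      halfNorm ρ u = -(ρ (xa 1) v + v) ∧ ρ (xa 0) u = ρ (a 1) v - v - u := by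
    simpa [d₁, add_eq_zero_iff_eq_neg, ← sub_eq_add_neg, eq_sub_iff_add_eq] using h
  refine (ρ.apply_bijective (xa 1)).injective ?_
  rw [xa_one_apply_cyclicNorm_eq_halfNorm, h_snd]
  simp only [map_sub, halfNorm_apply_a_one, h_fst, map_add, map_neg, apply_apply, xa_mul_xa,
    add_sub_cancel_right, map_zero]
  abel

lemma IsRelativelyProjective.comp_rotation (hρ : IsRelativelyProjective ρ) :
    IsRelativelyProjective (ρ.comp (rotation n)) := by
  obtain ⟨e, he⟩ := hρ
  refine ⟨e + ρ (xa 0) * e * ρ (xa 0)⁻¹, ?_⟩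
  have h_xa : ∑ i, ρ (a i) * (ρ (xa 0) * e * ρ (xa 0)⁻¹) * ρ (a i)⁻¹ =
      ∑ i, ρ (xa i) * e * ρ (xa i)⁻¹ :=
    Fintype.sum_equiv (.neg _) _ _ fun i ↦ by
      rw [show xa (Equiv.neg _ i) = a i * xa 0 by simp, mul_inv_rev, map_mul, map_mul]
      simp only [mul_assoc]
  rw [← he, sum_quaternionGroup, ← h_xa, ← Finset.sum_add_distrib]
  refine Fintype.sum_equiv Multiplicative.toAdd _ _ fun i ↦ ?_
  rw [mul_add, add_mul]
  rfl

lemma IsRelativelyProjective.exists_cyclicNorm_eq (hρ : IsRelativelyProjective ρ) {m : M}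
    (hm : ρ (a 1) m = m) : ∃ m', cyclicNorm ρ m' = m :=
  hρ.comp_rotation.exists_norm_eq <|
    mem_invariants_iff_of_forall_mem_zpowers _ _ mem_zpowers_ofAdd_one m |>.2 hm

lemma IsRelativelyProjective.exists_sub_eq_of_cyclicNorm_eq_zero (hρ : IsRelativelyProjective ρ)
    {m : M} (hm : cyclicNorm ρ m = 0) : ∃ m', ρ (a 1) m' - m' = m := by
  have h := hρ.comp_rotation.mem_coinvariantsKer hm
  rwa [FiniteCyclicGroup.coinvariantsKer_eq_range _ _ mem_zpowers_ofAdd_one] at h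

variable (ρ) in
lemma exists_a_one_apply_sub_eq (i : ZMod (2 * n)) (m : M) :
    ∃ t, ρ (a 1) t - t = ρ (a i) m - m := by
  have h := Coinvariants.sub_mem_ker (ρ := ρ.comp (rotation n)) (.ofAdd i) m
  rwa [FiniteCyclicGroup.coinvariantsKer_eq_range _ _ mem_zpowers_ofAdd_one] at h

variable (ρ) in
lemma coinvariantsKer_le_range_d₂ : Coinvariants.ker ρ ≤ LinearMap.range (d₂ ρ) := by
  refine Submodule.span_le.2 ?_
  rintro _ ⟨⟨i | i, m⟩, rfl⟩
  · obtain ⟨t, ht⟩ := exists_a_one_apply_sub_eq ρ i m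
    exact ⟨(t, 0), by simpa [d₂] using ht⟩
  · obtain ⟨t, ht⟩ := exists_a_one_apply_sub_eq ρ (-i) (ρ (xa 0) m)
    refine ⟨(t, -m), ?_⟩
    calc d₂ ρ (t, -m) = (ρ (a 1) t - t) + (ρ (xa 0) m - m) := by
          rw [d₂_apply, map_neg]
          abel
      _ = ρ (xa i) m - m := by
          rw [ht]
          simp [apply_apply, -map_mul]

lemma IsRelativelyProjective.exact_d₂_norm (hρ : IsRelativelyProjective ρ) :
    Function.Exact (d₂ ρ) ρ.norm := by
  refine fun m ↦ ⟨fun hm ↦ coinvariantsKer_le_range_d₂ ρ (hρ.mem_coinvariantsKer hm), ?_⟩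
  rintro ⟨⟨u, v⟩, rfl⟩
  simp [d₂]

lemma IsRelativelyProjective.exists_snd_d₁_eq (hρ : IsRelativelyProjective ρ) {u v : M}
    (h : d₂ ρ (u, v) = 0) : ∃ w, (d₁ ρ w).2 = v := by
  have h_v : ρ (xa 0) v = ρ (a 1) u - u + v := by
    rw [← sub_eq_zero, ← neg_eq_zero, ← h, d₂_apply]
    abel
  have h_inv : cyclicNorm ρ v ∈ ρ.invariants := mem_invariants_iff_a_one_xa_one.2
    ⟨a_one_apply_cyclicNorm ρ v, by
      rw [← cyclicNorm_apply_xa_zero, h_v, map_add, map_sub, cyclicNorm_apply_a_one, sub_self,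
        zero_add]⟩
  obtain ⟨s, hs⟩ := hρ.exists_norm_eq h_inv
  rw [norm_eq_cyclicNorm_add, ← cyclicNorm_apply_xa_zero] at hs
  obtain ⟨t, ht⟩ : ∃ t, ρ (a 1) t - t = s + ρ (xa 0) s - v :=
    hρ.exists_sub_eq_of_cyclicNorm_eq_zero (by rw [map_sub, map_add, hs, sub_self])
  refine ⟨(s, t), ?_⟩
  change ρ (xa 0) s + s + (t - ρ (a 1) t) = v
  rw [← neg_sub (ρ (a 1) t), ht]
  abel

lemma IsRelativelyProjective.exact_d₁_d₂ (hρ : IsRelativelyProjective ρ) :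
    Function.Exact (d₁ ρ) (d₂ ρ) := by
  refine fun w ↦ ⟨fun hw ↦ ?_, ?_⟩
  · obtain ⟨u, v⟩ := w
    obtain ⟨w, hv⟩ := hρ.exists_snd_d₁_eq hw
    obtain ⟨u', hu'⟩ : ∃ u', (u, v) = d₁ ρ w + (u', 0) :=
      ⟨u - (d₁ ρ w).1, Prod.ext (by simp) (by simp [hv])⟩
    have h_inv : ρ (a 1) u' = u' := by
      rw [hu', map_add, d₂_d₁_apply, zero_add] at hw
      simpa [d₂, sub_eq_zero] using hw
    obtain ⟨r, hr⟩ : ∃ r, cyclicNorm ρ r = ρ (xa 1)⁻¹ u' := hρ.exists_cyclicNorm_eq <| by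
      have h_conj : a 1 * (xa 1)⁻¹ * a 1 = (xa 1 : QuaternionGroup n)⁻¹ := by
        simp [show (xa 1 : QuaternionGroup n)⁻¹ = xa (n + 1) from rfl]
      calc ρ (a 1) (ρ (xa 1)⁻¹ u') = ρ (a 1) (ρ (xa 1)⁻¹ (ρ (a 1) u')) := by rw [h_inv]
        _ = ρ (xa 1)⁻¹ u' := by rw [apply_apply, apply_apply, h_conj]
    refine ⟨w + (ρ (xa 0) r - r, halfNorm ρ r), ?_⟩
    rw [map_add, d₁_apply_sub_halfNorm, hr, self_inv_apply, hu']
  · rintro ⟨w, rfl⟩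
    exact d₂_d₁_apply ρ w

lemma IsRelativelyProjective.exact_d₀_d₁ (hρ : IsRelativelyProjective ρ) :
    Function.Exact (d₀ ρ) (d₁ ρ) := by
  refine fun w ↦ ⟨fun hw ↦ ?_, ?_⟩
  · obtain ⟨u, v⟩ := w
    obtain ⟨f, hf⟩ : ∃ f, ρ (a 1) f - f = u :=
      hρ.exists_sub_eq_of_cyclicNorm_eq_zero (cyclicNorm_eq_zero_of_d₁_eq_zero hw)
    obtain ⟨v', hv'⟩ : ∃ v', (u, v) = d₀ ρ f + (0, v') :=
      ⟨v - (d₀ ρ f).2, Prod.ext (by simp [d₀, hf]) (by simp)⟩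
    have h_inv : ρ (xa 1) v' + v' = 0 ∧ v' = ρ (a 1) v' := by
      rw [hv', map_add, d₁_d₀_apply, zero_add] at hw
      simpa [d₁, sub_eq_zero] using hw
    obtain ⟨r, rfl⟩ := hρ.exists_cyclicNorm_eq h_inv.2.symm
    obtain ⟨⟨s, t⟩, rfl⟩ := (hρ.exact_d₂_norm r).1 (by
      rw [norm_eq_cyclicNorm_add, add_comm, h_inv.1])
    refine ⟨f + cyclicNorm ρ t, ?_⟩
    rw [hv', map_add, cyclicNorm_apply_d₂, d₀_apply_cyclicNorm]
  · rintro ⟨w, rfl⟩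
    exact d₁_d₀_apply ρ w

end Quaternion

section Resolution

variable (k A : Type) [CommRing k] [AddCommGroup A] [Module k A] (n : ℕ)

/-- The functions `Q → A` on the generalized quaternion group, with right translations. -/
abbrev functions : Rep k (QuaternionGroup n) :=
  Rep.of (rightTranslation k (QuaternionGroup n) A)

/-- Pairs of functions `Q → A`, with right translations. -/
noncomputable abbrev functionPairs : Rep k (QuaternionGroup n) :=
  Rep.of ((rightTranslation k (QuaternionGroup n) A).prod
    (rightTranslation k (QuaternionGroup n) A))

/-- The operator `d₀` for left translations, as a morphism for right translations. -/
noncomputable def d₀Hom : functions k A n ⟶ functionPairs k A n :=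
  Rep.ofHom ⟨d₀ (leftTranslation k _ A), fun g ↦ d₀_naturality (rightTranslationHom k A g)⟩

/-- The operator `d₁` for left translations, as a morphism for right translations. -/
noncomputable def d₁Hom : functionPairs k A n ⟶ functionPairs k A n :=
  Rep.ofHom ⟨d₁ (leftTranslation k _ A), fun g ↦ d₁_naturality (rightTranslationHom k A g)⟩

/-- The operator `d₂` for left translations, as a morphism for right translations. -/
noncomputable def d₂Hom : functionPairs k A n ⟶ functions k A n :=
  Rep.ofHom ⟨d₂ (leftTranslation k _ A), fun g ↦ d₂_naturality (rightTranslationHom k A g)⟩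

lemma exact_constHom_d₀Hom :
    Function.Exact (constHom k (QuaternionGroup n) A).hom (d₀Hom k A n).hom := by
  intro f
  refine (exact_subtype_d₀ (leftTranslation k _ A) f).trans ⟨?_, ?_⟩
  · rintro ⟨⟨f, hf⟩, rfl⟩
    exact ⟨f 1, funext fun g ↦ by
      have h : f (g⁻¹ * g) = f g := congrFun (hf g) g
      rwa [inv_mul_cancel] at h⟩
  · rintro ⟨c, rfl⟩
    exact ⟨⟨fun _ ↦ c, fun _ ↦ rfl⟩, rfl⟩

variable [NeZero n]

lemma exact_d₀Hom_d₁Hom : Function.Exact (d₀Hom k A n).hom (d₁Hom k A n).hom :=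
  (isRelativelyProjective_leftTranslation k _ A).exact_d₀_d₁

lemma exact_d₁Hom_d₂Hom : Function.Exact (d₁Hom k A n).hom (d₂Hom k A n).hom :=
  (isRelativelyProjective_leftTranslation k _ A).exact_d₁_d₂

lemma exact_d₂Hom_augmentation :
    Function.Exact (d₂Hom k A n).hom (augmentation k (QuaternionGroup n) A).hom := by
  intro f
  refine Iff.trans ?_ ((isRelativelyProjective_leftTranslation k _ A).exact_d₂_norm f)
  rw [augmentation_apply, funext_iff]
  simp [norm_leftTranslation_apply]

/-- Dimension shifting along the exact sequence
`0 → A → F → F × F → F × F → F → A → 0`, where `F` is `functions k A n`. -/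
noncomputable def kernelAugmentationIso (m : ℕ) :
    groupCohomology (kernel (augmentation k (QuaternionGroup n) A)) (m + 1) ≅
      groupCohomology (Rep.trivial k (QuaternionGroup n) A) (m + 4) :=
  have h₀ := exact_of_function_exact (exact_constHom_d₀Hom k A n)
  have h₁ := exact_of_function_exact (exact_d₀Hom_d₁Hom k A n)
  have h₂ := exact_of_function_exact (exact_d₁Hom_d₂Hom k A n)
  have h₃ := exact_of_function_exact (exact_d₂Hom_augmentation k A n)
  have hF := isAcyclic_rightTranslation k (QuaternionGroup n) A
  have hF₂ := isAcyclic_rightTranslation_prod k (QuaternionGroup n) A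
  dimensionShift (shortExact_kernelLift (ShortComplex.exact_kernel _) h₃) hF₂ m ≪≫
    dimensionShift (shortExact_kernelLift (ShortComplex.exact_kernel _) h₂) hF₂ (m + 1) ≪≫
    dimensionShift (shortExact_kernelLift h₀ h₁) hF (m + 2)

end Resolution

/-- The quotient of `ℤ` by multiples of `m`, as the additive group `ZMod m`. -/
noncomputable def quotSMulTopIntEquivZMod (m : ℕ) : QuotSMulTop (m : ℤ) ℤ ≃+ ZMod m :=
  have h : (m : ℤ) • (⊤ : Submodule ℤ ℤ) = Ideal.span {(m : ℤ)} := by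
    rw [← Submodule.ideal_span_singleton_smul, smul_eq_mul, Ideal.mul_top]
  (Submodule.quotEquivOfEq _ _ h).toAddEquiv.trans (Int.quotientSpanNatEquivZMod m).toAddEquiv

end PeriodicResolution

open PeriodicResolution

theorem stmt_10_general {k A : Type} [CommRing k] [AddCommGroup A] [Module k A]
    (n : ℕ) [NeZero n] :
    Nonempty (groupCohomology (Rep.trivial k (QuaternionGroup n) A) 4 ≃ₗ[k]
      QuotSMulTop (4 * n : k) A) := by
  have e := (kernelAugmentationIso k A n 0).symm.toLinearEquiv.trans
    (H1KernelAugmentationEquiv k (QuaternionGroup n) A)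
  rw [QuaternionGroup.card, Nat.cast_mul, Nat.cast_ofNat] at e
  exact ⟨e⟩

/-- The fourth cohomology group of the quaternion group `Q₈` with trivial integral
coefficients is cyclic of order 8. -/
theorem stmt_10 :
    Nonempty ((groupCohomology (Rep.trivial ℤ (QuaternionGroup 2) ℤ) 4) ≃+ ZMod 8) := by
  obtain ⟨e⟩ := stmt_10_general (k := ℤ) (A := ℤ) 2
  exact ⟨e.toAddEquiv.trans (quotSMulTopIntEquivZMod 8)⟩
end
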